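/- arXiv:2305.02967 — 10 statements merged into one kernel-verified Lean document; each statement's English description precedes it below -/
import Mathlib

section
/- The reach objective is right-separating: let Σ be any type with a distinguished letter r ∈ Σ, and let R_r = Σ*·{r}·Σ* be the objective consisting of all words over Σ containing at least one occurrence of r. Then for all elements x, y of the monoid with zero M = Σ* ∪ {⊥}, x ≼_LR y holds (with respect to R_r) if and only if x ≼_R y holds (with respect to R_r). -/
/-- Membership of an element of the monoid with zero `M = Σ* ∪ {⊥}` in an
objective `O ⊆ Σ*`: the element is a (nonzero) word belonging to `O`. -/
def memObj {α : Type*} (O : Set (FreeMonoid α)) (x : WithZero (FreeMonoid α)) : Prop :=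
  ∃ w ∈ O, x = (w : WithZero (FreeMonoid α))

/-- The syntactic precongruence `≼_LR` induced by an objective `O` on `M`. -/
def preLR {α : Type*} (O : Set (FreeMonoid α)) (x y : WithZero (FreeMonoid α)) : Prop :=
  ∀ u w : FreeMonoid α,
    memObj O ((u : WithZero (FreeMonoid α)) * x * (w : WithZero (FreeMonoid α))) →
    memObj O ((u : WithZero (FreeMonoid α)) * y * (w : WithZero (FreeMonoid α)))

/-- The right precongruence `≼_R` induced by an objective `O` on `M`. -/
def preR {α : Type*} (O : Set (FreeMonoid α)) (x y : WithZero (FreeMonoid α)) : Prop :=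
  ∀ w : FreeMonoid α,
    memObj O (x * (w : WithZero (FreeMonoid α))) →
    memObj O (y * (w : WithZero (FreeMonoid α)))

/-- The reach objective `R_r = Σ*·{r}·Σ*`: all words containing the letter `r`. -/
def reachObj {α : Type*} (r : α) : Set (FreeMonoid α) :=
  {w : FreeMonoid α | r ∈ FreeMonoid.toList w}

theorem memObj_coe_aux {α : Type*} (r : α) (w : FreeMonoid α) :
    memObj (reachObj r) (w : WithZero (FreeMonoid α)) ↔ r ∈ FreeMonoid.toList w := by
  constructor
  · rintro ⟨v, hv, h⟩
    rw [WithZero.coe_inj] at h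
    subst h
    exact hv
  · intro h
    exact ⟨w, h, rfl⟩

theorem memObj_zero_aux {α : Type*} (r : α) :
    ¬ memObj (reachObj r) (0 : WithZero (FreeMonoid α)) := by
  rintro ⟨v, _, h⟩
  exact WithZero.coe_ne_zero h.symm

/-- The reach objective is right-separating. -/
theorem reach_right_separating (α : Type*) (r : α) :
    ∀ x y : WithZero (FreeMonoid α),
      preLR (reachObj r) x y ↔ preR (reachObj r) x y := by
  intro x y
  constructor
  · intro h w hw
    have := h 1 w
    simp only [WithZero.coe_one, one_mul] at this
    exact this hw
  · intro h u w hx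
    induction x using WithZero.recZeroCoe with
    | zero =>
      rw [mul_zero, zero_mul] at hx
      exact absurd hx (memObj_zero_aux r)
    | coe a =>
      induction y using WithZero.recZeroCoe with
      | zero =>
        have h1 := h (FreeMonoid.of r)
        rw [zero_mul, ← WithZero.coe_mul, memObj_coe_aux] at h1
        exact absurd (h1 (by simp [FreeMonoid.toList_mul])) (memObj_zero_aux r)
      | coe b =>
        have h1 := h 1
        rw [← WithZero.coe_mul, ← WithZero.coe_mul, memObj_coe_aux, memObj_coe_aux,
          mul_one, mul_one] at h1
        rw [← WithZero.coe_mul, ← WithZero.coe_mul, memObj_coe_aux] at hx ⊢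
        simp only [FreeMonoid.toList_mul, List.mem_append] at hx ⊢
        tauto
end

section
/- There are right-separating and domain-shattering objectives over every alphabet: for every nonempty type Σ there exists a language O ⊆ List Σ such that (i) for every word u : List Σ there exists a nonempty word v with u ++ v ∈ O, and (ii) for all words u, u' : List Σ with u ≠ u' there exists a nonempty word v with u ++ v ∈ O and u' ++ v ∉ O. -/
/-- There are right-separating and domain-shattering objectives over every
(nonempty) alphabet: a language such that every word can be completed into it
and any two distinct words are separated by some nonempty right context. -/
theorem exists_right_separating_domain_shattering (α : Type*) [Nonempty α] :
    ∃ O : Set (List α),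
      (∀ u : List α, ∃ v : List α, v ≠ [] ∧ u ++ v ∈ O) ∧
      (∀ u u' : List α, u ≠ u' →
        ∃ v : List α, v ≠ [] ∧ u ++ v ∈ O ∧ u' ++ v ∉ O) := by
  obtain ⟨a⟩ := ‹Nonempty α›
  let O : Set (List α) := {x | x.reverse = x ∧ ∃ i : ℕ, x.length = 2 ^ i}
  have key : ∀ (u : List α) (j : ℕ), u.length < 2 ^ j →
      ∃ v : List α, v = List.replicate (2 ^ (j+1) - 2 * u.length) a ++ u.reverse ∧
        v ≠ [] ∧ u ++ v ∈ O := by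
    intro u j hj
    have h2 : 2 ^ (j+1) = 2 * 2 ^ j := by ring
    refine ⟨_, rfl, ?_, ?_, j+1, ?_⟩
    · intro h
      have := congrArg List.length h
      simp only [List.length_append, List.length_replicate, List.length_reverse,
        List.length_nil] at this
      omega
    · simp
    · simp only [List.length_append, List.length_replicate, List.length_reverse]
      omega
  refine ⟨O, ?_, ?_⟩
  · intro u
    obtain ⟨v, -, h⟩ := key u u.length Nat.lt_two_pow_self
    exact ⟨v, h⟩
  · intro u u' hne
    obtain ⟨j, hj⟩ : ∃ j, u.length + u'.length < 2 ^ j := ⟨_, Nat.lt_two_pow_self⟩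
    obtain ⟨v, hv, h1, h2⟩ := key u j (by omega)
    refine ⟨v, h1, h2, ?_⟩
    rintro ⟨hp, i, hi⟩
    have e : 2 ^ (j+1) = 2 * 2 ^ j := by ring
    by_cases hl : u.length = u'.length
    · rw [hv] at hp
      simp only [List.reverse_append, List.reverse_reverse, List.reverse_replicate,
        List.append_assoc] at hp
      exact hne (List.append_inj hp hl).1
    · rw [hv] at hi
      simp only [List.length_append, List.length_replicate, List.length_reverse] at hi
      rcases lt_trichotomy i (j+1) with h | h | h
      · have := Nat.pow_le_pow_right (n := 2) (by norm_num) (Nat.lt_succ_iff.mp h)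
        omega
      · rw [h] at hi
        omega
      · have := Nat.pow_le_pow_right (n := 2) (by norm_num) (Nat.succ_le_of_lt h)
        have e2 : 2 ^ (j+1).succ = 4 * 2 ^ j := by rw [Nat.succ_eq_add_one]; ring
        omega
end

section
/- The even-palindrome language separates distinct words: let Σ be a type containing two distinct elements. Then for all words u, u' : List Σ with u ≠ u', there exists a nonempty word v : List Σ such that u ++ v ∈ O_pal and u' ++ v ∉ O_pal. -/
/-- The language of even-length palindromes over `α`. -/
def Opal (α : Type*) : Set (List α) :=
  {x : List α | ∃ w : List α, x = w ++ w.reverse}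

theorem opal_aux {α : Type*} (a b : α) (hab : a ≠ b) (s t s' t' : List α) (n : ℕ)
    (h1 : s.length < t.length) (h2 : t.length ≤ n)
    (h : s ++ ((List.replicate n a ++ [b]) ++ s') = t ++ ((List.replicate n a ++ [b]) ++ t')) :
    False := by
  have h3 := congrArg (fun l => l[s.length + n]?) h
  have hl : (s ++ ((List.replicate n a ++ [b]) ++ s'))[s.length + n]? = some b := by
    rw [List.getElem?_append_right (by omega), List.getElem?_append_left (by simp),
      List.getElem?_append_right (by simp)]
    simp
  have hr : (t ++ ((List.replicate n a ++ [b]) ++ t'))[s.length + n]? = some a := by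
    rw [List.getElem?_append_right (by omega), List.getElem?_append_left (by simp; omega),
      List.getElem?_append_left (by simp; omega), List.getElem?_replicate, if_pos (by omega)]
  have h4 : some b = some a := hl.symm.trans (h3.trans hr)
  exact hab (Option.some.inj h4).symm

/-- The even-palindrome language separates distinct words. -/
theorem palindrome_separates (α : Type*) (a b : α) (hab : a ≠ b) :
    ∀ u u' : List α, u ≠ u' →
      ∃ v : List α, v ≠ [] ∧ u ++ v ∈ Opal α ∧ u' ++ v ∉ Opal α := by
  intro u u' hne
  obtain ⟨n, hn⟩ : ∃ n, n = u.length + u'.length := ⟨_, rfl⟩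
  refine ⟨(List.replicate n a ++ [b]) ++ ((List.replicate n a ++ [b]).reverse ++ u.reverse),
    by simp, ⟨u ++ (List.replicate n a ++ [b]), by simp⟩, ?_⟩
  rintro ⟨w, hw⟩
  have hr := congrArg List.reverse hw
  rw [List.reverse_append (as := w), List.reverse_reverse, ← hw] at hr
  have hr2 : u ++ ((List.replicate n a ++ [b]) ++
      ((List.replicate n a ++ [b]).reverse ++ u'.reverse)) =
      u' ++ ((List.replicate n a ++ [b]) ++
      ((List.replicate n a ++ [b]).reverse ++ u.reverse)) := by
    rw [← hr]; simp
  rcases lt_trichotomy u.length u'.length with h | h | h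
  · exact opal_aux a b hab _ _ _ _ n h (by omega) hr2
  · exact hne (List.append_inj hr2 h).1
  · exact opal_aux a b hab _ _ _ _ n h (by omega) hr2.symm
end

section
/- Shorter-word case of palindrome separation: let Σ be any type, let u, u' : List Σ be words with u'.length < u.length, and let a : Σ be any letter different from the element of u at position u'.length (0-indexed). Then u ++ [a, a] ++ reverse u ∈ O_pal, while u' ++ [a, a] ++ reverse u ∉ O_pal. -/
/-- Shorter-word case of palindrome separation. -/
theorem palindrome_separates_shorter (α : Type*) (u u' : List α)
    (hlen : u'.length < u.length) (a : α) (ha : a ≠ u.get ⟨u'.length, hlen⟩) :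
    u ++ [a, a] ++ u.reverse ∈ Opal α ∧ u' ++ [a, a] ++ u.reverse ∉ Opal α := by
  constructor
  · exact ⟨u ++ [a], by simp⟩
  · rintro ⟨w, hw⟩
    have h : (u' ++ [a, a] ++ u.reverse) = u ++ ([a, a] ++ u'.reverse) := by
      have h2 := congrArg List.reverse hw
      simp only [List.reverse_append, List.reverse_reverse] at h2
      rw [hw, ← h2]
      simp
    have h3 := congrArg (fun l => l[u'.length]?) h
    simp [List.getElem?_append_left hlen, List.getElem?_eq_getElem hlen] at h3
    exact ha (by simpa using h3)
end

section
/- Longer-word case of palindrome separation: let Σ be any type, let u, u' : List Σ be words with u.length < u'.length, and let a : Σ be any letter different from the element of u' at position u.length (0-indexed). Then u ++ [a, a] ++ reverse u ∈ O_pal, while u' ++ [a, a] ++ reverse u ∉ O_pal. -/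
/-- Longer-word case of palindrome separation. -/
theorem palindrome_separates_longer (α : Type*) (u u' : List α)
    (hlen : u.length < u'.length) (a : α) (ha : a ≠ u'.get ⟨u.length, hlen⟩) :
    u ++ [a, a] ++ u.reverse ∈ Opal α ∧ u' ++ [a, a] ++ u.reverse ∉ Opal α := by
  refine ⟨⟨u ++ [a], by simp⟩, ?_⟩
  rintro ⟨w, hw⟩
  have h : (u' ++ [a, a] ++ u.reverse).reverse = u' ++ [a, a] ++ u.reverse := by
    rw [hw]; simp
  have h2 := congrArg (fun l => l[u.length]?) h
  simp [List.getElem?_append, hlen] at h2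
  exact ha (by simpa using h2)
end

section
/- The syntactic precongruence induced by the even-palindrome language is the identity on words (the language is domain-shattering): let Σ be a type containing two distinct elements. Then for all words u, u' : List Σ, the following are equivalent: (a) for all words s, t : List Σ, s ++ u ++ t ∈ O_pal implies s ++ u' ++ t ∈ O_pal; (b) u = u'. -/
theorem opal_aux_s7 {α : Type*} {a b : α} (hab : a ≠ b) {p q : List α}
    (h : ∀ c : α, p ++ ([c, c] ++ q.reverse) = q ++ ([c, c] ++ p.reverse)) :
    q.length ≤ p.length := by
  by_contra! hlt
  have key : ∀ c : α, q[p.length]? = some c := by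
    intro c
    have h1 := congrArg (fun l => l[p.length]?) (h c)
    rw [List.getElem?_append_right (le_refl _), List.getElem?_append_left hlt] at h1
    simpa using h1.symm
  have := (key a).symm.trans (key b)
  exact hab (Option.some.inj this)

/-- The syntactic precongruence induced by the even-palindrome language is the
identity on words: the language is domain-shattering. -/
theorem palindrome_syntactic_precongruence_eq_id (α : Type*) (a b : α) (hab : a ≠ b) :
    ∀ u u' : List α,
      (∀ s t : List α, s ++ u ++ t ∈ Opal α → s ++ u' ++ t ∈ Opal α) ↔ u = u' := by
  intro u u'
  constructor
  · intro h
    have key : ∀ c : α, u' ++ ([c, c] ++ u.reverse) = u ++ ([c, c] ++ u'.reverse) := by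
      intro c
      obtain ⟨w, hw⟩ := h [] ([c, c] ++ u.reverse) ⟨u ++ [c], by simp⟩
      have h2 := congrArg List.reverse hw
      have h3 : (w ++ w.reverse).reverse = w ++ w.reverse := by simp
      rw [h3, ← hw] at h2
      simpa using h2.symm
    have h1 := opal_aux_s7 hab key
    have h2 := opal_aux_s7 hab (fun c => (key c).symm)
    exact ((List.append_inj (key a) (le_antisymm h2 h1)).1).symm
  · rintro rfl s t h
    exact h
end

section
/- The unary square objective separates distinct words: for all natural numbers i, j with i ≠ j, there exists a natural number m ≥ 1 such that i + m is a perfect square (there exists k : ℕ with i + m = k^2) and j + m is not a perfect square (there is no k : ℕ with j + m = k^2). -/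
/-- The unary square objective separates distinct words: for distinct unary
words `a^i ≠ a^j` there is a nonempty suffix `a^m` with `a^(i+m)` of square
length and `a^(j+m)` not of square length. -/
theorem unary_square_separates :
    ∀ i j : ℕ, i ≠ j →
      ∃ m : ℕ, 1 ≤ m ∧ (∃ k : ℕ, i + m = k ^ 2) ∧ ¬ (∃ k : ℕ, j + m = k ^ 2) := by
  intro i j hij
  have h0 : i + j + 1 ≤ (i + j + 1) ^ 2 := Nat.le_self_pow (by norm_num) _
  obtain ⟨m, hm⟩ : ∃ m, (i + j + 1) ^ 2 = i + m :=
    Nat.exists_eq_add_of_le (by omega)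
  refine ⟨m, by omega, ⟨i + j + 1, hm.symm⟩, ?_⟩
  rintro ⟨k, hk⟩
  rcases lt_trichotomy k (i + j + 1) with h | h | h
  · have h1 : k ≤ i + j := by omega
    have h2 : k ^ 2 ≤ (i + j) ^ 2 := Nat.pow_le_pow_left h1 2
    have h3 : (i + j + 1) ^ 2 = (i + j) ^ 2 + 2 * (i + j) + 1 := by ring
    omega
  · subst h
    omega
  · have h2 : (i + j + 1 + 1) ^ 2 ≤ k ^ 2 := Nat.pow_le_pow_left h 2
    have h3 : (i + j + 1 + 1) ^ 2 = (i + j + 1) ^ 2 + 2 * (i + j + 1) + 1 := by ring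
    omega
end

section
/- The syntactic precongruence induced by the unary square objective is the identity (the unary square language is domain-shattering): for all natural numbers i, j, the following are equivalent: (a) for all natural numbers s, t, if s + i + t is a perfect square (∃ k, s + i + t = k^2) then s + j + t is a perfect square (∃ k, s + j + t = k^2); (b) i = j. -/
/-- The syntactic precongruence induced by the unary square objective is the
identity: the unary square language is domain-shattering. -/
theorem unary_square_syntactic_precongruence_eq_id :
    ∀ i j : ℕ,
      (∀ s t : ℕ, (∃ k : ℕ, s + i + t = k ^ 2) → (∃ k : ℕ, s + j + t = k ^ 2)) ↔ i = j := by
  intro i j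
  constructor
  · intro h
    have hle : i ≤ (i + j + 1) ^ 2 := by nlinarith [Nat.zero_le ((i + j) ^ 2), Nat.zero_le i, Nat.zero_le j]
    obtain ⟨s, hs⟩ := Nat.exists_eq_add_of_le hle
    obtain ⟨k, hk⟩ := h s 0 ⟨i + j + 1, by omega⟩
    have h1 : k < i + j + 2 := by
      by_contra hc
      have : i + j + 2 ≤ k := by omega
      nlinarith
    have h2 : i + j < k := by
      by_contra hc
      have : k ≤ i + j := by omega
      nlinarith
    have h3 : k = i + j + 1 := by omega
    subst h3
    omega
  · rintro rfl s t h
    exact h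
end

section
/- Distinct state pairs are syntactically inequivalent for the path language: let Q be a type with initial state q₀ ∈ Q and a nonempty set of final states F ⊆ Q, and let L be the associated path language over the alphabet Q × Q. Then for all states q, q', r, r' : Q with (q, q') ≠ (r, r'), there exist words u, v : List (Q × Q) such that u ++ [(q, q')] ++ v ∈ L and u ++ [(r, r')] ++ v ∉ L. -/
/-- The path language over the alphabet `Q × Q` of state pairs: a word belongs
to it iff it is empty and `q0 ∈ F`, or it is nonempty, starts in `q0`, its
adjacent letters are continuous, and it ends in a final state. -/
def PathLang {Q : Type*} (q0 : Q) (F : Set Q) : Set (List (Q × Q)) :=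
  {x : List (Q × Q) |
    (x = [] ∧ q0 ∈ F) ∨
    (∃ h : x ≠ [],
      (x.head h).1 = q0 ∧
      x.Chain' (fun p q => p.2 = q.1) ∧
      (x.getLast h).2 ∈ F)}

/-- Distinct state pairs are syntactically inequivalent for the path language. -/
theorem distinct_pairs_syntactically_inequivalent (Q : Type*) (q0 : Q) (F : Set Q)
    (hF : F.Nonempty) :
    ∀ q q' r r' : Q, (q, q') ≠ (r, r') →
      ∃ u v : List (Q × Q),
        u ++ [(q, q')] ++ v ∈ PathLang q0 F ∧ u ++ [(r, r')] ++ v ∉ PathLang q0 F := by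
  obtain ⟨f, hf⟩ := hF
  intro q q' r r' hne
  refine ⟨[(q0, q)], [(q', f)], ?_, ?_⟩
  · right
    exact ⟨by simp, by simp, by simp [List.Chain'], by simpa using hf⟩
  · rintro (⟨h, -⟩ | ⟨h, -, hc, -⟩)
    · simp at h
    · simp [List.Chain'] at hc
      exact hne (by rw [hc.1, hc.2])
end

section
/- Normal forms of words modulo the syntactic congruence of the path language: let Q be a type with initial state q₀ ∈ Q and final states F ⊆ Q, and let L be the associated path language over the alphabet Q × Q. Then for every word x : List (Q × Q), at least one of the following holds: (a) x is syntactically congruent to the empty word, i.e., for all u, v : List (Q × Q), u ++ x ++ v ∈ L ↔ u ++ v ∈ L; (b) there exists a pair p : Q × Q such that x is syntactically congruent to the single-letter word [p], i.e., for all u, v, u ++ x ++ v ∈ L ↔ u ++ [p] ++ v ∈ L; (c) x is dead, i.e., for all u, v : List (Q × Q), u ++ x ++ v ∉ L. -/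
def RunFrom {Q : Type*} (F : Set Q) : Q → List (Q × Q) → Prop
  | p, [] => p ∈ F
  | p, a :: l => a.1 = p ∧ RunFrom F a.2 l

theorem mem_pathLang_iff {Q : Type*} (F : Set Q) (x : List (Q × Q)) :
    ∀ q0 : Q, x ∈ PathLang q0 F ↔ RunFrom F q0 x := by
  induction x with
  | nil => intro q0; simp [PathLang, RunFrom]
  | cons a l ih =>
    intro q0
    rw [RunFrom, ← ih a.2]
    cases l with
    | nil => simp [PathLang, List.Chain']
    | cons b l =>
      simp [PathLang, List.Chain', List.isChain_cons_cons]
      grind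

theorem runFrom_congr {Q : Type*} (F : Set Q) (x y : List (Q × Q))
    (h : ∀ r, RunFrom F r x ↔ RunFrom F r y) (u : List (Q × Q)) :
    ∀ r, RunFrom F r (u ++ x) ↔ RunFrom F r (u ++ y) := by
  induction u with
  | nil => simpa using h
  | cons a l ih => intro r; simp [RunFrom, ih]

theorem runFrom_dead {Q : Type*} (F : Set Q) (x : List (Q × Q))
    (h : ∀ r, ¬ RunFrom F r x) (u : List (Q × Q)) :
    ∀ r, ¬ RunFrom F r (u ++ x) := by
  induction u with
  | nil => simpa using h
  | cons a l ih => intro r; simp [RunFrom, ih]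

theorem runFrom_cases {Q : Type*} (F : Set Q) (x : List (Q × Q)) :
    x = [] ∨ (∃ p : Q × Q, ∀ r v, RunFrom F r (x ++ v) ↔ RunFrom F r (p :: v)) ∨
      (∀ r v, ¬ RunFrom F r (x ++ v)) := by
  induction x with
  | nil => exact Or.inl rfl
  | cons a l ih =>
    right
    rcases ih with rfl | ⟨p, hp⟩ | hd
    · exact Or.inl ⟨a, fun r v => by simp⟩
    · by_cases hc : p.1 = a.2
      · exact Or.inl ⟨(a.1, p.2), fun r v => by simp [RunFrom, hp, hc]⟩
      · exact Or.inr fun r v => by simp [RunFrom, hp, hc]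
    · exact Or.inr fun r v => by simp [RunFrom, hd]

/-- Normal forms of words modulo the syntactic congruence of the path
language: every word is congruent to the empty word, congruent to a
single-letter word, or dead. -/
theorem pathLang_normal_forms (Q : Type*) (q0 : Q) (F : Set Q) :
    ∀ x : List (Q × Q),
      (∀ u v : List (Q × Q), u ++ x ++ v ∈ PathLang q0 F ↔ u ++ v ∈ PathLang q0 F) ∨
      (∃ p : Q × Q, ∀ u v : List (Q × Q),
        u ++ x ++ v ∈ PathLang q0 F ↔ u ++ [p] ++ v ∈ PathLang q0 F) ∨
      (∀ u v : List (Q × Q), u ++ x ++ v ∉ PathLang q0 F) := by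
  intro x
  simp only [mem_pathLang_iff, List.append_assoc]
  rcases runFrom_cases F x with rfl | ⟨p, hp⟩ | hd
  · left; intro u v; simp
  · right; left
    exact ⟨p, fun u v => runFrom_congr F _ _ (fun r => hp r v) u q0⟩
  · right; right
    exact fun u v => runFrom_dead F _ (fun r => hd r v) u q0
end
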